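/- Over fully nondeterministic NPLTS models, probabilistic group-distribution bisimilarity, probabilistic bisimilarity, and probabilistic ⊔⊓-bisimilarity all coincide with classical bisimilarity of the underlying labeled transition system: for every fully nondeterministic NPLTS (S, A, →) and all s1, s2 ∈ S, the statements s1 ≈_{PB,dis} s2, s1 ≈_{PB} s2, s1 ≈_{PB,⊔⊓} s2, and s1 ≈_{B,fnd} s2 are all equivalent. -/

import Mathlib

open scoped ENNReal
open Classical

noncomputable section

/-- Infimum of a set of values in `ℝ≥0∞`, taken to be `0` when the set is empty
(matching the paper's convention for `⊓` over an empty set). -/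
def inf0 (X : Set ℝ≥0∞) : ℝ≥0∞ := if X = ∅ then 0 else sInf X

/-- Probability mass that a discrete distribution assigns to a set of states. -/
def pmfMass {S : Type} (D : PMF S) (G : Set S) : ℝ≥0∞ := ∑' x : G, D x

/-- A nondeterministic and probabilistic labeled transition system (NPLTS):
a transition relation `→ ⊆ S × A × Distr(S)`, with `Distr(S)` the discrete
probability distributions over `S` (formalized as `PMF S`). -/
structure NPLTS (S A : Type) where
  trans : S → A → PMF S → Prop

namespace NPLTS

variable {S A : Type}

/-- The set of actions enabled at a state. -/
def enabled (L : NPLTS S A) (s : S) : Set A := {a | ∃ D, L.trans s a D}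

/-- `s` has at least one outgoing transition. -/
def hasTrans (L : NPLTS S A) (s : S) : Prop := ∃ a D, L.trans s a D

/-- A finite computation from `s`, recorded as the list of its steps
(action, target state): each step must come from some transition whose
distribution gives the target state positive probability. -/
def IsComp (L : NPLTS S A) : S → List (A × S) → Prop
  | _, [] => True
  | s, (a, s') :: c => (∃ D, L.trans s a D ∧ s' ∈ D.support) ∧ L.IsComp s' c

/-- The probability of a computation: the product of the step probabilities.
(In a fully probabilistic NPLTS, such as a resolution, the chosen transition
at each state is unique, so the supremum below selects its probability.) -/
def compProb (L : NPLTS S A) : S → List (A × S) → ℝ≥0∞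
  | _, [] => 1
  | s, (a, s') :: c => (⨆ (D : PMF S) (_ : L.trans s a D), D s') * L.compProb s' c

/-- The probability of a set of computations from `s`. -/
def probSet (L : NPLTS S A) (s : S) (C : Set (List (A × S))) : ℝ≥0∞ :=
  ∑' c : C, L.compProb s (c : List (A × S))

/-- Each state has finitely many outgoing transitions. -/
def FinitelyBranching (L : NPLTS S A) : Prop :=
  ∀ s : S, {p : A × PMF S | L.trans s p.1 p.2}.Finite

/-- Every transition concentrates all the probability mass in a single state. -/
def FullyNondeterministic (L : NPLTS S A) : Prop :=
  ∀ s a D, L.trans s a D → ∃ s', D = PMF.pure s'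

/-- Every state has at most one outgoing transition. -/
def FullyProbabilistic (L : NPLTS S A) : Prop :=
  ∀ (s : S) a₁ D₁ a₂ D₂, L.trans s a₁ D₁ → L.trans s a₂ D₂ → a₁ = a₂ ∧ D₁ = D₂

/-- Fully synchronous parallel composition of two NPLTSs over the same actions. -/
def par {S₁ S₂ : Type} (L₁ : NPLTS S₁ A) (L₂ : NPLTS S₂ A) : NPLTS (S₁ × S₂) A where
  trans p a D := ∃ D₁ D₂, L₁.trans p.1 a D₁ ∧ L₂.trans p.2 a D₂ ∧
    ∀ q : S₁ × S₂, D q = D₁ q.1 * D₂ q.2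

end NPLTS

/-- The final state of a computation starting at `s`. -/
def lastState {S A : Type} : S → List (A × S) → S
  | s, [] => s
  | _, (_, s') :: c => lastState s' c

/-- The trace (sequence of actions) of a computation. -/
def traceOf {S A : Type} (c : List (A × S)) : List A := c.map Prod.fst

/-- Stepwise compatibility of a computation with a decorated trace: the actions
match and after each step the (corresponding) reached state satisfies `P`
with respect to the decoration. -/
def decoComp {S A Z : Type} (P : S → Set A → Prop) (corr : Z → S) :
    List (A × Z) → List (A × Set A) → Prop
  | [], [] => True
  | (a, z) :: c, (b, X) :: φ => a = b ∧ P (corr z) X ∧ decoComp P corr c φ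
  | _, _ => False

/-- A resolution of `s` obtained via a deterministic scheduler: a fully
probabilistic NPLTS together with a correspondence function to the states of
the original NPLTS. -/
structure Resolution {S A : Type} (L : NPLTS S A) (s : S) where
  State : Type
  countable : Countable State
  lts : NPLTS State A
  corr : State → S
  init : State
  corr_init : corr init = s
  mimic : ∀ z a D, lts.trans z a D →
    ∃ D', L.trans (corr z) a D' ∧ ∀ z', D z' = D' (corr z')
  det : ∀ z a₁ a₂ D₁ D₂, lts.trans z a₁ D₁ → lts.trans z a₂ D₂ → a₁ = a₂ ∧ D₁ = D₂

namespace Resolution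

variable {S A : Type} {L : NPLTS S A} {s : S}

/-- Probability of a set of computations of the resolution from its initial state. -/
def prob (R : Resolution L s) (C : Set (List (A × R.State))) : ℝ≥0∞ :=
  R.lts.probSet R.init C

/-- `CC(z_s, α)`: the α-compatible computations from the initial state. -/
def cc (R : Resolution L s) (α : List A) : Set (List (A × R.State)) :=
  {c | R.lts.IsComp R.init c ∧ traceOf c = α}

/-- `CCC(z_s, α)`: the completed α-compatible computations (the corresponding
final state has no outgoing transitions in the original NPLTS). -/
def ccc (R : Resolution L s) (α : List A) : Set (List (A × R.State)) :=
  {c | c ∈ R.cc α ∧ ¬ L.hasTrans (R.corr (lastState R.init c))}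

/-- `FCC(z_s, (α, F))`: α-compatible computations whose corresponding final
state enables no action of the failure set `F`. -/
def fcc (R : Resolution L s) (α : List A) (F : Set A) : Set (List (A × R.State)) :=
  {c | c ∈ R.cc α ∧ ∀ f ∈ F, f ∉ L.enabled (R.corr (lastState R.init c))}

/-- `RCC(z_s, (α, Rd))`: α-compatible computations whose corresponding final
state enables exactly the ready set `Rd`. -/
def rcc (R : Resolution L s) (α : List A) (Rd : Set A) : Set (List (A × R.State)) :=
  {c | c ∈ R.cc α ∧ L.enabled (R.corr (lastState R.init c)) = Rd}

/-- `FTCC(z_s, φ)`: computations compatible with the failure trace `φ`. -/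
def ftcc (R : Resolution L s) (φ : List (A × Set A)) : Set (List (A × R.State)) :=
  {c | R.lts.IsComp R.init c ∧
    decoComp (fun t F => ∀ f ∈ F, f ∉ L.enabled t) R.corr c φ}

/-- `RTCC(z_s, ρ)`: computations compatible with the ready trace `ρ`. -/
def rtcc (R : Resolution L s) (ρ : List (A × Set A)) : Set (List (A × R.State)) :=
  {c | R.lts.IsComp R.init c ∧ decoComp (fun t X => L.enabled t = X) R.corr c ρ}

/-- `R ∈ Res_α(s)`: the resolution has no (maximal) computation corresponding
to a proper prefix of an α-compatible computation of the original NPLTS. -/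
def InResAlpha (R : Resolution L s) (α : List A) : Prop :=
  ¬ ∃ c : List (A × R.State), R.lts.IsComp R.init c ∧
      ¬ R.lts.hasTrans (lastState R.init c) ∧
      ∃ c' : List (A × S), L.IsComp s c' ∧ traceOf c' = α ∧
        (c.map fun p => (p.1, R.corr p.2)) <+: c' ∧ c.length < c'.length

/-- A state of the resolution reachable from its initial state. -/
def reachable (R : Resolution L s) (z : R.State) : Prop :=
  ∃ c, R.lts.IsComp R.init c ∧ lastState R.init c = z

/-- A maximal resolution: it cannot be further extended, i.e. every reachable
state whose corresponding state has an outgoing transition has one too. -/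
def Maximal (R : Resolution L s) : Prop :=
  ∀ z, R.reachable z → L.hasTrans (R.corr z) → R.lts.hasTrans z

/-- `SC(z_{s,o})`: successful computations of a resolution of a configuration
of an interaction system (the test component of the final configuration is
the success state `ω`). -/
def sc {S O : Type} {I : NPLTS (S × O) A} {cfg : S × O}
    (R : Resolution I cfg) (ω : O) : Set (List (A × R.State)) :=
  {c | R.lts.IsComp R.init c ∧ (R.corr (lastState R.init c)).2 = ω}

/-- `SCC(z_{s,o}, α)`: successful α-compatible computations. -/
def scc {S O : Type} {I : NPLTS (S × O) A} {cfg : S × O}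
    (R : Resolution I cfg) (ω : O) (α : List A) : Set (List (A × R.State)) :=
  {c | (R.lts.IsComp R.init c ∧ (R.corr (lastState R.init c)).2 = ω) ∧ traceOf c = α}

end Resolution

section Equivalences

variable {S A : Type} (L : NPLTS S A)

/-! ### Trace-based equivalences -/

/-- Probabilistic trace-distribution equivalence `≈_{PTr,dis}`. -/
def PTrDis (s₁ s₂ : S) : Prop :=
  (∀ R₁ : Resolution L s₁, ∃ R₂ : Resolution L s₂,
    ∀ α : List A, R₁.prob (R₁.cc α) = R₂.prob (R₂.cc α)) ∧
  (∀ R₂ : Resolution L s₂, ∃ R₁ : Resolution L s₁,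
    ∀ α : List A, R₂.prob (R₂.cc α) = R₁.prob (R₁.cc α))

/-- Probabilistic trace equivalence `≈_{PTr}`. -/
def PTr (s₁ s₂ : S) : Prop :=
  ∀ α : List A,
    (∀ R₁ : Resolution L s₁, ∃ R₂ : Resolution L s₂,
      R₁.prob (R₁.cc α) = R₂.prob (R₂.cc α)) ∧
    (∀ R₂ : Resolution L s₂, ∃ R₁ : Resolution L s₁,
      R₂.prob (R₂.cc α) = R₁.prob (R₁.cc α))

/-- The set of values `prob(CC(z_s, α))` over the resolutions in `Res_α(s)`. -/
def ccVals (s : S) (α : List A) : Set ℝ≥0∞ :=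
  {p | ∃ R : Resolution L s, R.InResAlpha α ∧ p = R.prob (R.cc α)}

/-- Probabilistic ⊔⊓-trace equivalence `≈_{PTr,⊔⊓}`. -/
def PTrSupInf (s₁ s₂ : S) : Prop :=
  ∀ α : List A,
    sSup (ccVals L s₁ α) = sSup (ccVals L s₂ α) ∧
    inf0 (ccVals L s₁ α) = inf0 (ccVals L s₂ α)

/-- Probabilistic completed-trace-distribution equivalence `≈_{PCTr,dis}`. -/
def PCTrDis (s₁ s₂ : S) : Prop :=
  (∀ R₁ : Resolution L s₁, ∃ R₂ R₂' : Resolution L s₂, ∀ α : List A,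
    R₁.prob (R₁.cc α) = R₂.prob (R₂.cc α) ∧
    R₁.prob (R₁.ccc α) = R₂'.prob (R₂'.ccc α)) ∧
  (∀ R₂ : Resolution L s₂, ∃ R₁ R₁' : Resolution L s₁, ∀ α : List A,
    R₂.prob (R₂.cc α) = R₁.prob (R₁.cc α) ∧
    R₂.prob (R₂.ccc α) = R₁'.prob (R₁'.ccc α))

/-- Probabilistic completed-trace equivalence `≈_{PCTr}`. -/
def PCTr (s₁ s₂ : S) : Prop :=
  ∀ α : List A,
    (∀ R₁ : Resolution L s₁, ∃ R₂ R₂' : Resolution L s₂,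
      R₁.prob (R₁.cc α) = R₂.prob (R₂.cc α) ∧
      R₁.prob (R₁.ccc α) = R₂'.prob (R₂'.ccc α)) ∧
    (∀ R₂ : Resolution L s₂, ∃ R₁ R₁' : Resolution L s₁,
      R₂.prob (R₂.cc α) = R₁.prob (R₁.cc α) ∧
      R₂.prob (R₂.ccc α) = R₁'.prob (R₁'.ccc α))

/-- The set of values `prob(CCC(z_s, α))` over the resolutions in `Res_α(s)`. -/
def cccVals (s : S) (α : List A) : Set ℝ≥0∞ :=
  {p | ∃ R : Resolution L s, R.InResAlpha α ∧ p = R.prob (R.ccc α)}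

/-- Probabilistic ⊔⊓-completed-trace equivalence `≈_{PCTr,⊔⊓}`. -/
def PCTrSupInf (s₁ s₂ : S) : Prop :=
  ∀ α : List A,
    (sSup (ccVals L s₁ α) = sSup (ccVals L s₂ α) ∧
     inf0 (ccVals L s₁ α) = inf0 (ccVals L s₂ α)) ∧
    (sSup (cccVals L s₁ α) = sSup (cccVals L s₂ α) ∧
     inf0 (cccVals L s₁ α) = inf0 (cccVals L s₂ α))

/-- Probabilistic failure-distribution equivalence `≈_{PF,dis}`. -/
def PFDis (s₁ s₂ : S) : Prop :=
  (∀ R₁ : Resolution L s₁, ∃ R₂ : Resolution L s₂, ∀ (α : List A) (F : Set A),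
    R₁.prob (R₁.fcc α F) = R₂.prob (R₂.fcc α F)) ∧
  (∀ R₂ : Resolution L s₂, ∃ R₁ : Resolution L s₁, ∀ (α : List A) (F : Set A),
    R₂.prob (R₂.fcc α F) = R₁.prob (R₁.fcc α F))

/-- Probabilistic failure equivalence `≈_{PF}`. -/
def PF (s₁ s₂ : S) : Prop :=
  ∀ (α : List A) (F : Set A),
    (∀ R₁ : Resolution L s₁, ∃ R₂ : Resolution L s₂,
      R₁.prob (R₁.fcc α F) = R₂.prob (R₂.fcc α F)) ∧
    (∀ R₂ : Resolution L s₂, ∃ R₁ : Resolution L s₁,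
      R₂.prob (R₂.fcc α F) = R₁.prob (R₁.fcc α F))

/-- The set of values `prob(FCC(z_s, (α, F)))` over the resolutions in `Res_α(s)`. -/
def fccVals (s : S) (α : List A) (F : Set A) : Set ℝ≥0∞ :=
  {p | ∃ R : Resolution L s, R.InResAlpha α ∧ p = R.prob (R.fcc α F)}

/-- Probabilistic ⊔⊓-failure equivalence `≈_{PF,⊔⊓}`. -/
def PFSupInf (s₁ s₂ : S) : Prop :=
  ∀ (α : List A) (F : Set A),
    sSup (fccVals L s₁ α F) = sSup (fccVals L s₂ α F) ∧
    inf0 (fccVals L s₁ α F) = inf0 (fccVals L s₂ α F)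

/-- Probabilistic failure-trace-distribution equivalence `≈_{PFTr,dis}`. -/
def PFTrDis (s₁ s₂ : S) : Prop :=
  (∀ R₁ : Resolution L s₁, ∃ R₂ : Resolution L s₂, ∀ φ : List (A × Set A),
    R₁.prob (R₁.ftcc φ) = R₂.prob (R₂.ftcc φ)) ∧
  (∀ R₂ : Resolution L s₂, ∃ R₁ : Resolution L s₁, ∀ φ : List (A × Set A),
    R₂.prob (R₂.ftcc φ) = R₁.prob (R₁.ftcc φ))

/-- Probabilistic failure-trace equivalence `≈_{PFTr}`. -/
def PFTr (s₁ s₂ : S) : Prop :=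
  ∀ φ : List (A × Set A),
    (∀ R₁ : Resolution L s₁, ∃ R₂ : Resolution L s₂,
      R₁.prob (R₁.ftcc φ) = R₂.prob (R₂.ftcc φ)) ∧
    (∀ R₂ : Resolution L s₂, ∃ R₁ : Resolution L s₁,
      R₂.prob (R₂.ftcc φ) = R₁.prob (R₁.ftcc φ))

/-- The set of values `prob(FTCC(z_s, φ))` over the resolutions in
`Res_{a₁…aₙ}(s)`, where `a₁…aₙ` is the trace underlying `φ`. -/
def ftccVals (s : S) (φ : List (A × Set A)) : Set ℝ≥0∞ :=
  {p | ∃ R : Resolution L s, R.InResAlpha (φ.map Prod.fst) ∧ p = R.prob (R.ftcc φ)}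

/-- Probabilistic ⊔⊓-failure-trace equivalence `≈_{PFTr,⊔⊓}`. -/
def PFTrSupInf (s₁ s₂ : S) : Prop :=
  ∀ φ : List (A × Set A),
    sSup (ftccVals L s₁ φ) = sSup (ftccVals L s₂ φ) ∧
    inf0 (ftccVals L s₁ φ) = inf0 (ftccVals L s₂ φ)

/-- Probabilistic readiness-distribution equivalence `≈_{PR,dis}`. -/
def PRDis (s₁ s₂ : S) : Prop :=
  (∀ R₁ : Resolution L s₁, ∃ R₂ : Resolution L s₂, ∀ (α : List A) (Rd : Set A),
    R₁.prob (R₁.rcc α Rd) = R₂.prob (R₂.rcc α Rd)) ∧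
  (∀ R₂ : Resolution L s₂, ∃ R₁ : Resolution L s₁, ∀ (α : List A) (Rd : Set A),
    R₂.prob (R₂.rcc α Rd) = R₁.prob (R₁.rcc α Rd))

/-- Probabilistic readiness equivalence `≈_{PR}`. -/
def PR (s₁ s₂ : S) : Prop :=
  ∀ (α : List A) (Rd : Set A),
    (∀ R₁ : Resolution L s₁, ∃ R₂ : Resolution L s₂,
      R₁.prob (R₁.rcc α Rd) = R₂.prob (R₂.rcc α Rd)) ∧
    (∀ R₂ : Resolution L s₂, ∃ R₁ : Resolution L s₁,
      R₂.prob (R₂.rcc α Rd) = R₁.prob (R₁.rcc α Rd))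

/-- The set of values `prob(RCC(z_s, (α, Rd)))` over the resolutions in `Res_α(s)`. -/
def rccVals (s : S) (α : List A) (Rd : Set A) : Set ℝ≥0∞ :=
  {p | ∃ R : Resolution L s, R.InResAlpha α ∧ p = R.prob (R.rcc α Rd)}

/-- Probabilistic ⊔⊓-readiness equivalence `≈_{PR,⊔⊓}`. -/
def PRSupInf (s₁ s₂ : S) : Prop :=
  ∀ (α : List A) (Rd : Set A),
    sSup (rccVals L s₁ α Rd) = sSup (rccVals L s₂ α Rd) ∧
    inf0 (rccVals L s₁ α Rd) = inf0 (rccVals L s₂ α Rd)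

/-- Probabilistic ready-trace-distribution equivalence `≈_{PRTr,dis}`. -/
def PRTrDis (s₁ s₂ : S) : Prop :=
  (∀ R₁ : Resolution L s₁, ∃ R₂ : Resolution L s₂, ∀ ρ : List (A × Set A),
    R₁.prob (R₁.rtcc ρ) = R₂.prob (R₂.rtcc ρ)) ∧
  (∀ R₂ : Resolution L s₂, ∃ R₁ : Resolution L s₁, ∀ ρ : List (A × Set A),
    R₂.prob (R₂.rtcc ρ) = R₁.prob (R₁.rtcc ρ))

/-- Probabilistic ready-trace equivalence `≈_{PRTr}`. -/
def PRTr (s₁ s₂ : S) : Prop :=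
  ∀ ρ : List (A × Set A),
    (∀ R₁ : Resolution L s₁, ∃ R₂ : Resolution L s₂,
      R₁.prob (R₁.rtcc ρ) = R₂.prob (R₂.rtcc ρ)) ∧
    (∀ R₂ : Resolution L s₂, ∃ R₁ : Resolution L s₁,
      R₂.prob (R₂.rtcc ρ) = R₁.prob (R₁.rtcc ρ))

/-- The set of values `prob(RTCC(z_s, ρ))` over the resolutions in
`Res_{a₁…aₙ}(s)`, where `a₁…aₙ` is the trace underlying `ρ`. -/
def rtccVals (s : S) (ρ : List (A × Set A)) : Set ℝ≥0∞ :=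
  {p | ∃ R : Resolution L s, R.InResAlpha (ρ.map Prod.fst) ∧ p = R.prob (R.rtcc ρ)}

/-- Probabilistic ⊔⊓-ready-trace equivalence `≈_{PRTr,⊔⊓}`. -/
def PRTrSupInf (s₁ s₂ : S) : Prop :=
  ∀ ρ : List (A × Set A),
    sSup (rtccVals L s₁ ρ) = sSup (rtccVals L s₂ ρ) ∧
    inf0 (rtccVals L s₁ ρ) = inf0 (rtccVals L s₂ ρ)

end Equivalences

/-! ### Tests and testing equivalences -/

/-- A nondeterministic and probabilistic test (NPT): a finite NPLTS (finitely
many states, finitely many outgoing transitions per state, acyclic) with a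
distinguished success state `succ` having no outgoing transitions. -/
structure NPT (A : Type) where
  O : Type
  lts : NPLTS O A
  succ : O
  fin : Finite O
  finTrans : ∀ o : O, {p : A × PMF O | lts.trans o p.1 p.2}.Finite
  acyclic : ∀ (o : O) (c : List (A × O)), lts.IsComp o c → c ≠ [] → lastState o c ≠ o
  succ_stop : ∀ a D, ¬ lts.trans succ a D

section Testing

variable {S A : Type} (L : NPLTS S A)

/-- The set of success probabilities over the maximal resolutions of the
configuration `(s, o)` of the interaction system of `L` and `T`. -/
def scVals (T : NPT A) (s : S) (o : T.O) : Set ℝ≥0∞ :=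
  {p | ∃ R : Resolution (L.par T.lts) (s, o), R.Maximal ∧ p = R.prob (R.sc T.succ)}

/-- Probabilistic ⊔⊓-testing equivalence `≈_{PTe-⊔⊓}`. -/
def PTeSupInf (s₁ s₂ : S) : Prop :=
  ∀ (T : NPT A) (o : T.O),
    sSup (scVals L T s₁ o) = sSup (scVals L T s₂ o) ∧
    inf0 (scVals L T s₁ o) = inf0 (scVals L T s₂ o)

/-- Probabilistic ∀∃-testing equivalence `≈_{PTe-∀∃}`. -/
def PTeAE (s₁ s₂ : S) : Prop :=
  ∀ (T : NPT A) (o : T.O),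
    (∀ R₁ : Resolution (L.par T.lts) (s₁, o), R₁.Maximal →
      ∃ R₂ : Resolution (L.par T.lts) (s₂, o), R₂.Maximal ∧
        R₁.prob (R₁.sc T.succ) = R₂.prob (R₂.sc T.succ)) ∧
    (∀ R₂ : Resolution (L.par T.lts) (s₂, o), R₂.Maximal →
      ∃ R₁ : Resolution (L.par T.lts) (s₁, o), R₁.Maximal ∧
        R₂.prob (R₂.sc T.succ) = R₁.prob (R₁.sc T.succ))

/-- Probabilistic trace-by-trace-distribution testing equivalence `≈_{PTe-tbt,dis}`. -/
def PTeTbtDis (s₁ s₂ : S) : Prop :=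
  ∀ (T : NPT A) (o : T.O),
    (∀ R₁ : Resolution (L.par T.lts) (s₁, o), R₁.Maximal →
      ∃ R₂ : Resolution (L.par T.lts) (s₂, o), R₂.Maximal ∧ ∀ α : List A,
        ((R₁.ccc α).Nonempty → (R₂.ccc α).Nonempty) ∧
        R₁.prob (R₁.scc T.succ α) = R₂.prob (R₂.scc T.succ α)) ∧
    (∀ R₂ : Resolution (L.par T.lts) (s₂, o), R₂.Maximal →
      ∃ R₁ : Resolution (L.par T.lts) (s₁, o), R₁.Maximal ∧ ∀ α : List A,
        ((R₂.ccc α).Nonempty → (R₁.ccc α).Nonempty) ∧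
        R₂.prob (R₂.scc T.succ α) = R₁.prob (R₁.scc T.succ α))

/-- Probabilistic trace-by-trace testing equivalence `≈_{PTe-tbt}`. -/
def PTeTbt (s₁ s₂ : S) : Prop :=
  ∀ (T : NPT A) (o : T.O) (α : List A),
    (∀ R₁ : Resolution (L.par T.lts) (s₁, o), R₁.Maximal → (R₁.ccc α).Nonempty →
      ∃ R₂ : Resolution (L.par T.lts) (s₂, o), R₂.Maximal ∧ (R₂.ccc α).Nonempty ∧
        R₁.prob (R₁.scc T.succ α) = R₂.prob (R₂.scc T.succ α)) ∧
    (∀ R₂ : Resolution (L.par T.lts) (s₂, o), R₂.Maximal → (R₂.ccc α).Nonempty →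
      ∃ R₁ : Resolution (L.par T.lts) (s₁, o), R₁.Maximal ∧ (R₁.ccc α).Nonempty ∧
        R₂.prob (R₂.scc T.succ α) = R₁.prob (R₁.scc T.succ α))

/-- The set of values `prob(SCC(z_{s,o}, α))` over `Res_{max,C,α}(s, o)`. -/
def sccVals (T : NPT A) (s : S) (o : T.O) (α : List A) : Set ℝ≥0∞ :=
  {p | ∃ R : Resolution (L.par T.lts) (s, o), R.Maximal ∧ (R.ccc α).Nonempty ∧
    p = R.prob (R.scc T.succ α)}

/-- Probabilistic ⊔⊓-trace-by-trace testing equivalence `≈_{PTe-tbt,⊔⊓}`. -/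
def PTeTbtSupInf (s₁ s₂ : S) : Prop :=
  ∀ (T : NPT A) (o : T.O) (α : List A),
    ((∃ R : Resolution (L.par T.lts) (s₁, o), R.Maximal ∧ (R.ccc α).Nonempty) ↔
     (∃ R : Resolution (L.par T.lts) (s₂, o), R.Maximal ∧ (R.ccc α).Nonempty)) ∧
    sSup (sccVals L T s₁ o α) = sSup (sccVals L T s₂ o α) ∧
    inf0 (sccVals L T s₁ o α) = inf0 (sccVals L T s₂ o α)

end Testing

/-! ### Bisimulation equivalences -/

section Bisimulations

variable {S A : Type} (L : NPLTS S A)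

/-- `G` is a union of equivalence classes of `B` (a "group of classes"). -/
def BClosed (B : S → S → Prop) (G : Set S) : Prop :=
  ∀ x y, B x y → x ∈ G → y ∈ G

/-- A probabilistic group-distribution bisimulation. -/
def IsPBDis (B : S → S → Prop) : Prop :=
  Equivalence B ∧ ∀ s₁ s₂, B s₁ s₂ → ∀ a D₁, L.trans s₁ a D₁ →
    ∃ D₂, L.trans s₂ a D₂ ∧ ∀ G : Set S, BClosed B G → pmfMass D₁ G = pmfMass D₂ G

/-- Probabilistic group-distribution bisimilarity `≈_{PB,dis}`. -/
def PBDis (s₁ s₂ : S) : Prop := ∃ B, IsPBDis L B ∧ B s₁ s₂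

/-- A probabilistic bisimulation (class groups considered one at a time). -/
def IsPB (B : S → S → Prop) : Prop :=
  Equivalence B ∧ ∀ s₁ s₂, B s₁ s₂ → ∀ G : Set S, BClosed B G →
    ∀ a D₁, L.trans s₁ a D₁ →
      ∃ D₂, L.trans s₂ a D₂ ∧ pmfMass D₁ G = pmfMass D₂ G

/-- Probabilistic bisimilarity `≈_{PB}`. -/
def PB (s₁ s₂ : S) : Prop := ∃ B, IsPB L B ∧ B s₁ s₂

/-- The set of values `D(∪G)` over the `a`-transitions of `s`. -/
def massVals (s : S) (a : A) (G : Set S) : Set ℝ≥0∞ :=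
  {p | ∃ D, L.trans s a D ∧ p = pmfMass D G}

/-- A probabilistic ⊔⊓-bisimulation. -/
def IsPBSupInf (B : S → S → Prop) : Prop :=
  Equivalence B ∧ ∀ s₁ s₂, B s₁ s₂ → ∀ G : Set S, BClosed B G → ∀ a : A,
    ((∃ D, L.trans s₁ a D) ↔ (∃ D, L.trans s₂ a D)) ∧
    sSup (massVals L s₁ a G) = sSup (massVals L s₂ a G) ∧
    inf0 (massVals L s₁ a G) = inf0 (massVals L s₂ a G)

/-- Probabilistic ⊔⊓-bisimilarity `≈_{PB,⊔⊓}`. -/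
def PBSupInf (s₁ s₂ : S) : Prop := ∃ B, IsPBSupInf L B ∧ B s₁ s₂

/-- Classical bisimilarity of the underlying LTS of a fully nondeterministic
NPLTS, where `s →a s'` means `s →a D` with `D(s') = 1`. -/
def BFnd (s₁ s₂ : S) : Prop :=
  ∃ B : S → S → Prop, Equivalence B ∧
    (∀ t₁ t₂, B t₁ t₂ → ∀ a t₁', (∃ D, L.trans t₁ a D ∧ D t₁' = 1) →
      ∃ t₂', (∃ D, L.trans t₂ a D ∧ D t₂' = 1) ∧ B t₁' t₂') ∧
    B s₁ s₂

end Bisimulations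

end

/-!
In a fully nondeterministic model the four kinds of bisimulation are the same equivalence
relations, so no change of witness is needed. Distribution-wise matching gives matching group by
group, which says that related states have the same set of masses, hence the same suprema and
infima. Conversely, the supremum of the masses of a group is nonzero iff some transition meets that
group; applied to a single equivalence class this recovers a matching step whenever transitions are
Dirac. Finally, Dirac distributions at related states give the same mass to every union of classes.
-/

theorem pmf_apply_eq_one_iff_eq_pure {S : Type*} (D : PMF S) (x : S) :
    D x = 1 ↔ D = PMF.pure x := by
  refine ⟨fun hx => PMF.ext fun y => ?_, fun h => h ▸ PMF.pure_apply_self x⟩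
  by_cases hy : y = x
  · rw [hy, hx, PMF.pure_apply_self]
  · have hsupp : D.support = {x} := (D.apply_eq_one_iff x).mp hx
    rw [PMF.pure_apply_of_ne x y hy, D.apply_eq_zero_iff, hsupp, Set.mem_singleton_iff]
    exact hy

section Mass

variable {S : Type}

theorem pmfMass_eq_toOuterMeasure (D : PMF S) (G : Set S) : pmfMass D G = D.toOuterMeasure G := by
  rw [pmfMass, tsum_subtype, PMF.toOuterMeasure_apply]

theorem pmfMass_eq_zero_iff (D : PMF S) (G : Set S) : pmfMass D G = 0 ↔ Disjoint D.support G := by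
  rw [pmfMass_eq_toOuterMeasure, PMF.toOuterMeasure_apply_eq_zero_iff]

theorem pmfMass_pure (x : S) (G : Set S) : pmfMass (PMF.pure x) G = if x ∈ G then 1 else 0 := by
  rw [pmfMass_eq_toOuterMeasure, PMF.toOuterMeasure_pure_apply]

end Mass

section Transitions

variable {S A : Type} (L : NPLTS S A)

theorem massVals_nonempty_iff (s : S) (a : A) (G : Set S) :
    (massVals L s a G).Nonempty ↔ ∃ D, L.trans s a D :=
  ⟨fun ⟨_, D, hD, _⟩ => ⟨D, hD⟩, fun ⟨D, hD⟩ => ⟨_, D, hD, rfl⟩⟩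

theorem sSup_massVals_eq_zero_iff (s : S) (a : A) (G : Set S) :
    sSup (massVals L s a G) = 0 ↔ ∀ D, L.trans s a D → Disjoint D.support G := by
  rw [← bot_eq_zero, sSup_eq_bot]
  constructor
  · intro h D hD
    exact (pmfMass_eq_zero_iff D G).mp (h _ ⟨D, hD, rfl⟩)
  · rintro h _ ⟨D, hD, rfl⟩
    exact (pmfMass_eq_zero_iff D G).mpr (h D hD)

/-- The transition relation `s →a s'` of the labeled transition system underlying `L`: some
`a`-transition of `s` reaches `s'` with probability `1`. Transitions that are not Dirac
contribute no step. -/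
def NPLTS.Step (s : S) (a : A) (s' : S) : Prop := ∃ D, L.trans s a D ∧ D s' = 1

theorem NPLTS.step_iff_trans_pure (s : S) (a : A) (s' : S) :
    L.Step s a s' ↔ L.trans s a (PMF.pure s') := by
  simp only [NPLTS.Step, pmf_apply_eq_one_iff_eq_pure, exists_eq_right]

/-- A classical bisimulation for the labeled transition system underlying `L`, required to be an
equivalence relation like the bisimulations `IsPBDis`, `IsPB` and `IsPBSupInf`. -/
def IsBFnd (B : S → S → Prop) : Prop :=
  Equivalence B ∧ ∀ s₁ s₂, B s₁ s₂ → ∀ a s₁', L.Step s₁ a s₁' → ∃ s₂', L.Step s₂ a s₂' ∧ B s₁' s₂'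

theorem bFnd_iff_exists_isBFnd (s₁ s₂ : S) : BFnd L s₁ s₂ ↔ ∃ B, IsBFnd L B ∧ B s₁ s₂ := by
  simp only [BFnd, IsBFnd, NPLTS.Step, and_assoc]

end Transitions

section Bisimulations

variable {S A : Type} {L : NPLTS S A} {B : S → S → Prop}

theorem bClosed_setOf_rel [IsTrans S B] (x : S) : BClosed B {y | B x y} :=
  fun _ _ hyz hxy => trans_of B hxy hyz

theorem IsPBDis.isPB (hB : IsPBDis L B) : IsPB L B := by
  refine ⟨hB.1, fun s₁ s₂ hs G hG a D₁ hD₁ => ?_⟩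
  obtain ⟨D₂, hD₂, hmass⟩ := hB.2 s₁ s₂ hs a D₁ hD₁
  exact ⟨D₂, hD₂, hmass G hG⟩

theorem IsPB.massVals_eq (hB : IsPB L B) {s₁ s₂ : S} (hs : B s₁ s₂) (a : A) {G : Set S}
    (hG : BClosed B G) : massVals L s₁ a G = massVals L s₂ a G := by
  have massVals_subset {t₁ t₂ : S} (ht : B t₁ t₂) : massVals L t₁ a G ⊆ massVals L t₂ a G := by
    rintro _ ⟨D, hD, rfl⟩
    exact hB.2 t₁ t₂ ht G hG a D hD
  exact (massVals_subset hs).antisymm (massVals_subset (hB.1.symm hs))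

theorem IsPB.isPBSupInf (hB : IsPB L B) : IsPBSupInf L B := by
  refine ⟨hB.1, fun s₁ s₂ hs G hG a => ?_⟩
  rw [← massVals_nonempty_iff L s₁ a G, ← massVals_nonempty_iff L s₂ a G, hB.massVals_eq hs a hG]
  exact ⟨Iff.rfl, rfl, rfl⟩

theorem IsPBSupInf.exists_trans_mem_support (hB : IsPBSupInf L B) {s₁ s₂ : S} (hs : B s₁ s₂)
    {a : A} {D₁ : PMF S} (hD₁ : L.trans s₁ a D₁) {x : S} (hx : x ∈ D₁.support) :
    ∃ D₂, L.trans s₂ a D₂ ∧ ∃ y ∈ D₂.support, B x y := by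
  have : IsTrans S B := ⟨fun _ _ _ => hB.1.trans⟩
  obtain ⟨-, hsup, -⟩ := hB.2 s₁ s₂ hs {y | B x y} (bClosed_setOf_rel x) a
  have hsup_ne : sSup (massVals L s₁ a {y | B x y}) ≠ 0 := fun h =>
    Set.disjoint_left.mp ((sSup_massVals_eq_zero_iff L s₁ a _).mp h D₁ hD₁) hx (hB.1.refl x)
  rw [hsup, Ne, sSup_massVals_eq_zero_iff] at hsup_ne
  push Not at hsup_ne
  obtain ⟨D₂, hD₂, hmeet⟩ := hsup_ne
  exact ⟨D₂, hD₂, Set.not_disjoint_iff.mp hmeet⟩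

theorem IsPBSupInf.isBFnd (hfn : L.FullyNondeterministic) (hB : IsPBSupInf L B) :
    IsBFnd L B := by
  refine ⟨hB.1, fun s₁ s₂ hs a x hx => ?_⟩
  rw [L.step_iff_trans_pure] at hx
  obtain ⟨D₂, hD₂, y, hy, hxy⟩ :=
    hB.exists_trans_mem_support hs hx ((PMF.mem_support_pure_iff x x).mpr rfl)
  obtain ⟨z, rfl⟩ := hfn s₂ a D₂ hD₂
  obtain rfl := (PMF.mem_support_pure_iff z y).mp hy
  exact ⟨y, (L.step_iff_trans_pure s₂ a y).mpr hD₂, hxy⟩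

theorem IsBFnd.isPBDis (hfn : L.FullyNondeterministic) (hB : IsBFnd L B) : IsPBDis L B := by
  refine ⟨hB.1, fun s₁ s₂ hs a D₁ hD₁ => ?_⟩
  obtain ⟨x, rfl⟩ := hfn s₁ a D₁ hD₁
  obtain ⟨y, hy, hxy⟩ := hB.2 s₁ s₂ hs a x ((L.step_iff_trans_pure s₁ a x).mpr hD₁)
  refine ⟨PMF.pure y, (L.step_iff_trans_pure s₂ a y).mp hy, fun G hG => ?_⟩
  have hmem : x ∈ G ↔ y ∈ G := ⟨hG x y hxy, hG y x (hB.1.symm hxy)⟩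
  simp only [pmfMass_pure, hmem]

theorem NPLTS.FullyNondeterministic.isBisimulation_tfae (hfn : L.FullyNondeterministic)
    (B : S → S → Prop) : [IsPBDis L B, IsPB L B, IsPBSupInf L B, IsBFnd L B].TFAE := by
  tfae_have 1 → 2 := IsPBDis.isPB
  tfae_have 2 → 3 := IsPB.isPBSupInf
  tfae_have 3 → 4 := IsPBSupInf.isBFnd hfn
  tfae_have 4 → 1 := IsBFnd.isPBDis hfn
  tfae_finish

end Bisimulations

theorem bisim_coincide_fully_nondeterministic_general {S A : Type} (L : NPLTS S A)
    (hfn : L.FullyNondeterministic) (s₁ s₂ : S) :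
    (PBDis L s₁ s₂ ↔ PB L s₁ s₂) ∧
    (PB L s₁ s₂ ↔ PBSupInf L s₁ s₂) ∧
    (PBSupInf L s₁ s₂ ↔ BFnd L s₁ s₂) := by
  have htfae := hfn.isBisimulation_tfae
  rw [bFnd_iff_exists_isBFnd]
  exact ⟨exists_congr fun B => and_congr_left' ((htfae B).out 0 1),
    exists_congr fun B => and_congr_left' ((htfae B).out 1 2),
    exists_congr fun B => and_congr_left' ((htfae B).out 2 3)⟩

/-- over fully nondeterministic NPLTS models, `≈_{PB,dis}`, `≈_{PB}`,
`≈_{PB,⊔⊓}`, and classical bisimilarity `≈_{B,fnd}` all coincide. -/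
theorem bisim_coincide_fully_nondeterministic
    {S A : Type} [Countable S] [Countable A] (L : NPLTS S A)
    (hfn : L.FullyNondeterministic) (s₁ s₂ : S) :
    (PBDis L s₁ s₂ ↔ PB L s₁ s₂) ∧
    (PB L s₁ s₂ ↔ PBSupInf L s₁ s₂) ∧
    (PBSupInf L s₁ s₂ ↔ BFnd L s₁ s₂) :=
  bisim_coincide_fully_nondeterministic_general L hfn s₁ s₂
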